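/- Under hypotheses (g1), (g2), (h1) and (hg), if moreover h′₊(0) ≥ 0, then there exists a minimizer ū of F on 𝒲_μ that is nondecreasing and convex on [0,R] (so that x ↦ ū(|x|) is a convex function on the ball B_R ⊂ ℝ^N). Symmetrically, if h′₋(0) ≤ 0 there exists a minimizer that is nonincreasing and concave. -/

import Mathlib

open MeasureTheory Set Filter
open scoped ENNReal

noncomputable section

/-- The space `𝒲` of functions `u` on `(0,R]`, locally absolutely continuous on `(0,R]`
(encoded by the representation `u r = -∫_r^R u'`), with `u R = 0` and
`r ↦ r^(N-1) |u' r|` in `L¹(0,R)`; `u'` is the a.e. derivative of `u`. -/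
structure RadW (N : ℕ) (R : ℝ) where
  u : ℝ → ℝ
  u' : ℝ → ℝ
  integ : IntegrableOn (fun r : ℝ => r ^ (N - 1) * |u' r|) (Ioc 0 R)
  rep : ∀ r ∈ Ioc (0:ℝ) R, u r = -∫ ρ in Ioc r R, u' ρ

/-- Membership in `𝒲_μ`: the gradient constraint `|u'(r)| ≤ μ(r)` a.e. on `(0,R)`. -/
def memWmu (N : ℕ) (R : ℝ) (μ : ℝ → ℝ≥0∞) (u : RadW N R) : Prop :=
  ∀ᵐ r ∂(volume.restrict (Ioc (0:ℝ) R)), ENNReal.ofReal |u.u' r| ≤ μ r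

/-- The extended-real integral `∫ f = ∫⁻ f⁺ - ∫⁻ f⁻`, with values in `[-∞,+∞]`. -/
def ERInt (f : ℝ → ℝ) (s : Set ℝ) : EReal :=
  ((∫⁻ x in s, ENNReal.ofReal (f x) : ℝ≥0∞) : EReal)
    - ((∫⁻ x in s, ENNReal.ofReal (-f x) : ℝ≥0∞) : EReal)

/-- The radial functional `F(u) = ∫₀^R r^(N-1) [g(|u'(r)|) + h(u(r))] dr`. -/
def Fcon (N : ℕ) (R : ℝ) (g h : ℝ → ℝ) (u : RadW N R) : EReal :=
  ERInt (fun r : ℝ => r ^ (N - 1) * (g |u.u' r| + h (u.u r))) (Ioc 0 R)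

/-- The constant `M := lim_{s→∞} g(s)/s ∈ (-∞,+∞]` (realized as a liminf in `[-∞,+∞]`;
the limit exists by convexity). -/
def MconstE (g : ℝ → ℝ) : EReal :=
  Filter.liminf (fun s : ℝ => ((g s / s : ℝ) : EReal)) Filter.atTop

/-- The right derivative `h'₊(0)` of a convex function `h` at `0`,
`h'₊(0) = inf_{t > 0} (h(t) - h(0))/t`. -/
def rightD (h : ℝ → ℝ) : ℝ := sInf ((fun t : ℝ => (h t - h 0) / t) '' Ioi 0)

/-- The left derivative `h'₋(0)` of a convex function `h` at `0`,
`h'₋(0) = sup_{t < 0} (h(t) - h(0))/t`. -/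
def leftD (h : ℝ → ℝ) : ℝ := sSup ((fun t : ℝ => (h t - h 0) / t) '' Iio 0)

/-!
Suppose `h'₊(0) ≥ 0`. The problem is written in terms of the slope `q = |u'|`. Lowering `q` to
`min q K` saves at least `(cR/N) (q - K)⁺` in `g`, where `c = max(h'₋(0), 0)` and `K` is chosen
large by (hg), and costs at most `c ∫_r^R (q - K)⁺` in `h`; Fubini shows that the total cost does
not exceed the total saving. So slopes may be taken in `[0, K]`, and `h` may be replaced by the
nondecreasing function `t ↦ h (max t z)`, where `z` minimizes `h` on the range `[-RK, 0]` of the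
potentials.

Now rearrange the slope monotonically with respect to `r^(N-1) dr`. The `g`-part is unchanged and
the constraint survives because `μ` is nondecreasing. Linearizing `h` by a monotone subgradient
`ψ` along the rearranged potential and integrating by parts turns the change of the `h`-part into
a pairing of slopes with the flux `ρ^(1-N) ∫_0^ρ r^(N-1) ψ`, which is nondecreasing, so the
Hardy–Littlewood inequality shows that the `h`-part decreases. Helly's theorem yields a minimizer
among nondecreasing slopes; cutting its potential off at `z` gives a convex nondecreasing
minimizer of `F`. The other half follows by the reflection `u ↦ -u`.
-/

open ProbabilityTheory
open scoped Topology

/-! ### Helly's selection theorem -/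

/-- The left limit at `x` of a bounded monotone function `l` on the rationals. -/
def leftEnvelope (l : ℚ → ℝ) (x : ℝ) : ℝ := sSup (l '' {q | (q : ℝ) < x})

section Helly

variable {a b : ℝ} {l : ℚ → ℝ}

lemma image_rat_lt_nonempty (l : ℚ → ℝ) (x : ℝ) : (l '' {q | (q : ℝ) < x}).Nonempty :=
  Nonempty.image l (exists_rat_lt x)

lemma bddAbove_image_rat_lt (hl : ∀ q, l q ∈ Icc a b) (x : ℝ) :
    BddAbove (l '' {q | (q : ℝ) < x}) :=
  ⟨b, forall_mem_image.2 fun q _ => (hl q).2⟩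

lemma le_leftEnvelope (hl : ∀ q, l q ∈ Icc a b) {q : ℚ} {x : ℝ} (hqx : (q : ℝ) < x) :
    l q ≤ leftEnvelope l x :=
  le_csSup (bddAbove_image_rat_lt hl x) (mem_image_of_mem l hqx)

lemma leftEnvelope_mem_Icc (hl : ∀ q, l q ∈ Icc a b) (x : ℝ) : leftEnvelope l x ∈ Icc a b := by
  obtain ⟨q, hq⟩ := exists_rat_lt x
  exact ⟨(hl q).1.trans (le_leftEnvelope hl hq),
    csSup_le (image_rat_lt_nonempty l x) (forall_mem_image.2 fun q _ => (hl q).2)⟩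

lemma leftEnvelope_monotone (hl : ∀ q, l q ∈ Icc a b) : Monotone (leftEnvelope l) :=
  fun x y hxy => csSup_le_csSup (bddAbove_image_rat_lt hl y) (image_rat_lt_nonempty l x)
    (image_mono fun _ hq => lt_of_lt_of_le hq hxy)

lemma tendsto_leftEnvelope_of_tendsto_rat {ι : Type*} {L : Filter ι} {f : ι → ℝ → ℝ}
    (hf : ∀ i, Monotone (f i)) (hl : ∀ q, l q ∈ Icc a b)
    (hlim : ∀ q : ℚ, Tendsto (fun i => f i q) L (𝓝 (l q))) {x : ℝ}
    (hx : ContinuousAt (leftEnvelope l) x) :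
    Tendsto (fun i => f i x) L (𝓝 (leftEnvelope l x)) := by
  refine tendsto_order.2 ⟨fun c hc => ?_, fun c hc => ?_⟩
  · obtain ⟨_, ⟨q, hqx, rfl⟩, hcq⟩ := exists_lt_of_lt_csSup (image_rat_lt_nonempty l x) hc
    filter_upwards [(hlim q).eventually_const_lt hcq] with i hi
    exact hi.trans_le (hf i (le_of_lt hqx))
  · obtain ⟨y, hyc, hxy⟩ := ((hx.eventually_lt_const hc).filter_mono nhdsWithin_le_nhds
      |>.and (self_mem_nhdsWithin (a := x) (s := Ioi x))).exists
    obtain ⟨q, hxq, hqy⟩ := exists_rat_btwn (show x < y from hxy)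
    filter_upwards [(hlim q).eventually_lt_const ((le_leftEnvelope hl hqy).trans_lt hyc)] with i hi
    exact (hf i hxq.le).trans_lt hi

theorem exists_subseq_ae_tendsto_of_monotone {f : ℕ → ℝ → ℝ} (hf : ∀ n, Monotone (f n))
    (hfb : ∀ n x, f n x ∈ Icc a b) :
    ∃ p : ℝ → ℝ, Monotone p ∧ (∀ x, p x ∈ Icc a b) ∧ ∃ φ : ℕ → ℕ, StrictMono φ ∧
      ∀ᵐ x, Tendsto (fun n => f (φ n) x) atTop (𝓝 (p x)) := by
  have hcompact : IsCompact (univ.pi fun _ : ℚ => Icc a b) :=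
    isCompact_univ_pi fun _ => isCompact_Icc
  obtain ⟨l, hl, φ, hφ, hlim⟩ := hcompact.tendsto_subseq (x := fun n (q : ℚ) => f n q)
    fun n q _ => hfb n q
  replace hl : ∀ q, l q ∈ Icc a b := fun q => hl q (mem_univ q)
  have hp := leftEnvelope_monotone hl
  refine ⟨leftEnvelope l, hp, leftEnvelope_mem_Icc hl, φ, hφ, ?_⟩
  filter_upwards [hp.countable_not_continuousAt.ae_notMem volume] with x hx
  exact tendsto_leftEnvelope_of_tendsto_rat (fun n => hf (φ n)) hl (tendsto_pi_nhds.1 hlim)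
    (not_not.1 hx)

end Helly

/-! ### Monotone rearrangement -/

/-- The nondecreasing function with the same distribution as `q` under the atomless finite
measure `ω`. -/
def monotoneRearrangement (ω : Measure ℝ) (q : ℝ → ℝ≥0∞) (r : ℝ) : ℝ≥0∞ :=
  sInf {t | ω (Iic r) ≤ ω {x | q x ≤ t}}

section Rearrangement

variable {ω : Measure ℝ}

lemma measure_setOf_measure_Iic_le [IsFiniteMeasure ω] [NullSingletonClass ω] {c : ℝ≥0∞}
    (hc : c ≤ ω univ) : ω {r | ω (Iic r) ≤ c} = c := by
  have hmono : Monotone fun r => ω (Iic r) := fun r s hrs => measure_mono (Iic_subset_Iic.2 hrs)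
  have hmeas : MeasurableSet {r | ω (Iic r) ≤ c} := hmono.measurable measurableSet_Iic
  refine le_antisymm ?_ ?_
  · rw [hmeas.measure_eq_iSup_isCompact]
    refine iSup₂_le fun K hK => iSup_le fun hKc => ?_
    rcases K.eq_empty_or_nonempty with rfl | hne
    · simp
    obtain ⟨m, hmK, hm⟩ := hKc.exists_isGreatest hne
    exact (measure_mono fun x hx => hm hx).trans (hK hmK)
  · have hcompl : ω {r | ω (Iic r) ≤ c}ᶜ ≤ ω univ - c := by
      rw [hmeas.compl.measure_eq_iSup_isCompact]
      refine iSup₂_le fun K hK => iSup_le fun hKc => ?_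
      rcases K.eq_empty_or_nonempty with rfl | hne
      · simp
      obtain ⟨m, hmK, hm⟩ := hKc.exists_isLeast hne
      calc ω K ≤ ω (Ici m) := measure_mono fun x hx => hm hx
        _ = ω (Iic m)ᶜ := by rw [compl_Iic, measure_congr Ioi_ae_eq_Ici]
        _ = ω univ - ω (Iic m) := measure_compl measurableSet_Iic (measure_ne_top ω _)
        _ ≤ ω univ - c := tsub_le_tsub_left (not_le.1 (notMem_ofPred_iff.1 (hK hmK))).le _
    calc c = ω univ - (ω univ - c) := (ENNReal.sub_sub_cancel (measure_ne_top ω _) hc).symm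
      _ ≤ ω univ - ω {r | ω (Iic r) ≤ c}ᶜ := tsub_le_tsub_left hcompl _
      _ = ω {r | ω (Iic r) ≤ c} := by
        rw [← measure_compl hmeas.compl (measure_ne_top ω _), compl_compl]

variable {q : ℝ → ℝ≥0∞}

lemma monotoneRearrangement_monotone : Monotone (monotoneRearrangement ω q) :=
  fun _ _ hrs => sInf_le_sInf fun _ ht => (measure_mono (Iic_subset_Iic.2 hrs)).trans ht

lemma monotoneRearrangement_le_iff [IsFiniteMeasure ω] (hq : AEMeasurable q ω) {r : ℝ}
    {t : ℝ≥0∞} : monotoneRearrangement ω q r ≤ t ↔ ω (Iic r) ≤ ω {x | q x ≤ t} := by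
  refine ⟨fun h => ?_, fun h => sInf_le h⟩
  rcases eq_top_or_lt_top t with rfl | ht
  · simpa using measure_mono (subset_univ _)
  have hinter : ⋂ s > t, {x | q x ≤ s} = {x | q x ≤ t} := by
    ext x
    simp only [mem_ofPred_eq, mem_iInter]
    exact ⟨le_of_forall_gt_imp_ge_of_dense, fun hx s hs => hx.trans (le_of_lt hs)⟩
  have hlim : Tendsto (fun s => ω {x | q x ≤ s}) (𝓝[>] t) (𝓝 (ω {x | q x ≤ t})) :=
    hinter ▸ tendsto_measure_biInter_gt (fun s _ => hq.nullMeasurableSet_preimage measurableSet_Iic)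
      (fun s s' _ hss' x hx => le_trans hx hss') ⟨⊤, ht, measure_ne_top ω _⟩
  have : (𝓝[>] t).NeBot := nhdsGT_neBot_of_exists_gt ⟨⊤, ht⟩
  refine ge_of_tendsto hlim ?_
  filter_upwards [self_mem_nhdsWithin] with s hs
  obtain ⟨s', hs', hlt⟩ := sInf_lt_iff.1 (h.trans_lt hs)
  exact hs'.trans (measure_mono fun x hx => le_trans hx hlt.le)

lemma identDistrib_monotoneRearrangement [IsFiniteMeasure ω] [NullSingletonClass ω]
    (hq : AEMeasurable q ω) : IdentDistrib (monotoneRearrangement ω q) q ω ω where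
  aemeasurable_fst := monotoneRearrangement_monotone.measurable.aemeasurable
  aemeasurable_snd := hq
  map_eq := by
    refine Measure.ext_of_Iic _ _ fun t => ?_
    rw [Measure.map_apply monotoneRearrangement_monotone.measurable measurableSet_Iic,
      Measure.map_apply_of_aemeasurable hq measurableSet_Iic]
    simp only [preimage, mem_Iic, monotoneRearrangement_le_iff hq]
    exact measure_setOf_measure_Iic_le (measure_mono (subset_univ _))

lemma monotoneRearrangement_le_of_monotoneOn [IsFiniteMeasure ω] (hq : AEMeasurable q ω)
    {m : ℝ → ℝ≥0∞} {s : Set ℝ} (hm : MonotoneOn m s) (hs : ∀ᵐ x ∂ω, x ∈ s)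
    (hqm : ∀ᵐ x ∂ω, q x ≤ m x) {r : ℝ} (hr : r ∈ s) : monotoneRearrangement ω q r ≤ m r := by
  refine (monotoneRearrangement_le_iff hq).2 (measure_mono_ae ?_)
  filter_upwards [hs, hqm] with x hxs hx hxr
  exact hx.trans (hm hxs hr hxr)

theorem exists_monotone_identDistrib [IsFiniteMeasure ω] [NullSingletonClass ω] {q : ℝ → ℝ}
    {K : ℝ} (hq : AEMeasurable q ω) (hqK : ∀ x, q x ∈ Icc 0 K) {m : ℝ → ℝ≥0∞} {s : Set ℝ}
    (hm : MonotoneOn m s) (hs : ∀ᵐ x ∂ω, x ∈ s) (hqm : ∀ᵐ x ∂ω, ENNReal.ofReal (q x) ≤ m x) :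
    ∃ p : ℝ → ℝ, Monotone p ∧ (∀ x, p x ∈ Icc 0 K) ∧ IdentDistrib p q ω ω ∧
      ∀ᵐ x ∂ω, ENNReal.ofReal (p x) ≤ m x := by
  have hK : 0 ≤ K := (hqK 0).1.trans (hqK 0).2
  set P := monotoneRearrangement ω (fun x => ENNReal.ofReal (q x))
  have hPK : ∀ x, P x ≤ ENNReal.ofReal K := fun x =>
    monotoneRearrangement_le_of_monotoneOn hq.ennreal_ofReal (monotoneOn_const (s := univ))
      (by simp) (ae_of_all ω fun y => ENNReal.ofReal_le_ofReal (hqK y).2) (mem_univ x)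
  refine ⟨fun x => (P x).toReal, fun x y hxy => ENNReal.toReal_mono
    ((hPK y).trans_lt ENNReal.ofReal_lt_top).ne (monotoneRearrangement_monotone hxy),
    fun x => ⟨ENNReal.toReal_nonneg, ENNReal.toReal_le_of_le_ofReal hK (hPK x)⟩, ?_, ?_⟩
  · simpa only [Function.comp_def, ENNReal.toReal_ofReal (hqK _).1] using
      (identDistrib_monotoneRearrangement hq.ennreal_ofReal).comp ENNReal.measurable_toReal
  · filter_upwards [hs] with x hx
    exact ENNReal.ofReal_toReal_le.trans
      (monotoneRearrangement_le_of_monotoneOn hq.ennreal_ofReal hm hs hqm hx)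

end Rearrangement

section HardyLittlewood

variable {ω : Measure ℝ}

lemma setLIntegral_le_of_identDistrib_of_monotone {p q : ℝ → ℝ≥0∞} (hp : Monotone p)
    (hpq : IdentDistrib p q ω ω) {U : Set ℝ} (hU : IsUpperSet U) :
    ∫⁻ x in U, q x ∂ω ≤ ∫⁻ x in U, p x ∂ω := by
  have hUm : MeasurableSet U := hU.ordConnected.measurableSet
  set t := ⨅ x ∈ U, p x
  have hp_le : ∀ x ∉ U, p x ≤ t := fun x hx =>
    le_iInf₂ fun y hy => hp (not_lt.1 fun hlt => hx (hU hlt.le hy))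
  calc ∫⁻ x in U, q x ∂ω ≤ ∫⁻ x in U, (t + (q x - t)) ∂ω :=
        lintegral_mono fun x => le_add_tsub
    _ = ∫⁻ _ in U, t ∂ω + ∫⁻ x in U, (q x - t) ∂ω := lintegral_add_left measurable_const _
    _ ≤ ∫⁻ _ in U, t ∂ω + ∫⁻ x, (q x - t) ∂ω := add_le_add_right (setLIntegral_le_lintegral _ _) _
    _ = ∫⁻ _ in U, t ∂ω + ∫⁻ x, (p x - t) ∂ω := congrArg _
        (hpq.comp (measurable_id.sub_const t)).lintegral_eq.symm
    _ = ∫⁻ _ in U, t ∂ω + ∫⁻ x in U, (p x - t) ∂ω := congrArg _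
        (setLIntegral_eq_of_support_subset <|
          Function.support_subset_iff'.2 fun x hx => tsub_eq_zero_of_le (hp_le x hx)).symm
    _ = ∫⁻ x in U, (t + (p x - t)) ∂ω := (lintegral_add_left measurable_const _).symm
    _ = ∫⁻ x in U, p x ∂ω := setLIntegral_congr_fun hUm fun x hx =>
        add_tsub_cancel_of_le (iInf₂_le x hx)

lemma lintegral_ofReal_mul_le_of_identDistrib_of_monotone {p q : ℝ → ℝ≥0∞} (hp : Monotone p)
    (hpq : IdentDistrib p q ω ω) {φ : ℝ → ℝ} (hφ : Monotone φ) (hφ0 : 0 ≤ φ) :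
    ∫⁻ x, q x * ENNReal.ofReal (φ x) ∂ω ≤ ∫⁻ x, p x * ENNReal.ofReal (φ x) ∂ω := by
  have layer_cake : ∀ f : ℝ → ℝ≥0∞, AEMeasurable f ω → ∫⁻ x, f x * ENNReal.ofReal (φ x) ∂ω =
      ∫⁻ t in Ioi 0, ∫⁻ x in {x | t < φ x}, f x ∂ω := by
    intro f hf
    refine (lintegral_withDensity_eq_lintegral_mul₀ hf
      hφ.measurable.ennreal_ofReal.aemeasurable).symm.trans ?_
    rw [lintegral_eq_lintegral_meas_lt _ (ae_of_all _ hφ0) hφ.measurable.aemeasurable]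
    exact lintegral_congr fun t => withDensity_apply _ (hφ.measurable measurableSet_Ioi)
  rw [layer_cake q hpq.aemeasurable_snd, layer_cake p hpq.aemeasurable_fst]
  exact lintegral_mono fun t => setLIntegral_le_of_identDistrib_of_monotone hp hpq
    fun x y hxy hx => lt_of_lt_of_le hx (hφ hxy)

theorem integral_mul_le_of_identDistrib_of_monotone {p q φ : ℝ → ℝ} (hp : Monotone p)
    (hp0 : 0 ≤ p) (hq0 : 0 ≤ q) (hpq : IdentDistrib p q ω ω) (hφ : Monotone φ) (hφ0 : 0 ≤ φ)
    (hpφ : Integrable (fun x => p x * φ x) ω) :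
    ∫ x, q x * φ x ∂ω ≤ ∫ x, p x * φ x ∂ω := by
  have hlint := lintegral_ofReal_mul_le_of_identDistrib_of_monotone
    (fun _ _ hxy => ENNReal.ofReal_le_ofReal (hp hxy))
    (hpq.comp ENNReal.measurable_ofReal) hφ hφ0
  simp only [Function.comp_apply, ← ENNReal.ofReal_mul (hq0 _), ← ENNReal.ofReal_mul (hp0 _)]
    at hlint
  rw [integral_eq_lintegral_of_nonneg_ae (ae_of_all ω fun x => mul_nonneg (hq0 x) (hφ0 x))
      (hpq.aemeasurable_snd.mul hφ.measurable.aemeasurable).aestronglyMeasurable,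
    integral_eq_lintegral_of_nonneg_ae (ae_of_all ω fun x => mul_nonneg (hp0 x) (hφ0 x))
      hpφ.aestronglyMeasurable]
  exact ENNReal.toReal_mono hpφ.lintegral_lt_top.ne hlint

end HardyLittlewood

/-! ### The radial measure -/

/-- The measure `r ^ (N - 1) dr` on `(0, R]`, the radial part of Lebesgue measure on the ball of
radius `R` in `ℝ ^ N`. -/
def radialMeasure (N : ℕ) (R : ℝ) : Measure ℝ :=
  (volume.restrict (Ioc 0 R)).withDensity fun r => ENNReal.ofReal (r ^ (N - 1))

section RadialMeasure

variable {N : ℕ} {R : ℝ} {f : ℝ → ℝ}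

lemma ae_radialMeasure_eq (N : ℕ) (R : ℝ) :
    ae (radialMeasure N R) = ae (volume.restrict (Ioc 0 R)) := by
  refine le_antisymm (withDensity_absolutelyContinuous _ _).ae_le
    (withDensity_absolutelyContinuous' (by fun_prop) ?_).ae_le
  filter_upwards [ae_restrict_mem measurableSet_Ioc] with r hr
  exact (ENNReal.ofReal_pos.2 (pow_pos hr.1 _)).ne'

lemma radialMeasure_absolutelyContinuous (N : ℕ) (R : ℝ) :
    radialMeasure N R ≪ volume.restrict (Ioc 0 R) :=
  Measure.ae_le_iff_absolutelyContinuous.1 (ae_radialMeasure_eq N R).le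

lemma absolutelyContinuous_radialMeasure (N : ℕ) (R : ℝ) :
    volume.restrict (Ioc 0 R) ≪ radialMeasure N R :=
  Measure.ae_le_iff_absolutelyContinuous.1 (ae_radialMeasure_eq N R).ge

lemma ae_radialMeasure_mem_Ioc (N : ℕ) (R : ℝ) : ∀ᵐ r ∂radialMeasure N R, r ∈ Ioc 0 R := by
  rw [ae_radialMeasure_eq]
  exact ae_restrict_mem measurableSet_Ioc

instance : IsFiniteMeasure (radialMeasure N R) :=
  isFiniteMeasure_withDensity_ofReal (continuous_pow _).integrableOn_Ioc.2

instance : NullSingletonClass (radialMeasure N R) :=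
  inferInstanceAs (NullSingletonClass (Measure.withDensity _ _))

lemma integrable_radialMeasure_iff :
    Integrable f (radialMeasure N R) ↔ IntegrableOn (fun r => r ^ (N - 1) * f r) (Ioc 0 R) := by
  rw [radialMeasure, integrable_withDensity_iff_integrable_smul' (by fun_prop) (by simp)]
  refine integrable_congr ?_
  filter_upwards [ae_restrict_mem measurableSet_Ioc] with r hr
  rw [ENNReal.toReal_ofReal (pow_nonneg hr.1.le _), smul_eq_mul]

lemma integral_radialMeasure (N : ℕ) (R : ℝ) (f : ℝ → ℝ) :
    ∫ r, f r ∂radialMeasure N R = ∫ r in Ioc 0 R, r ^ (N - 1) * f r := by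
  rw [radialMeasure, integral_withDensity_eq_integral_toReal_smul (by fun_prop) (by simp)]
  refine setIntegral_congr_fun measurableSet_Ioc fun r hr => ?_
  simp only [ENNReal.toReal_ofReal (pow_nonneg hr.1.le _), smul_eq_mul]

lemma integrableOn_Ioc_of_integrable_radialMeasure (hf : Integrable f (radialMeasure N R))
    {r : ℝ} (hr : 0 < r) : IntegrableOn f (Ioc r R) := by
  have hsub : Ioc r R ⊆ Ioc 0 R := Ioc_subset_Ioc_left hr.le
  have hweighted : IntegrableOn (fun x => (r ^ (N - 1))⁻¹ * ‖x ^ (N - 1) * f x‖) (Ioc r R) :=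
    ((integrable_radialMeasure_iff.1 hf).mono_set hsub).norm.const_mul _
  refine hweighted.mono' ((hf.aestronglyMeasurable.mono_ac
    (absolutelyContinuous_radialMeasure N R)).mono_measure (Measure.restrict_mono hsub le_rfl)) ?_
  filter_upwards [ae_restrict_mem measurableSet_Ioc] with x hx
  rw [norm_mul, norm_pow, Real.norm_of_nonneg (hr.le.trans hx.1.le), ← mul_assoc]
  refine le_mul_of_one_le_left (norm_nonneg _) ?_
  rw [inv_mul_eq_div, one_le_div (pow_pos hr _)]
  exact pow_le_pow_left₀ hr.le hx.1.le _

end RadialMeasure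

section ExtendedIntegral

variable {N : ℕ} {R : ℝ}

lemma ERInt_mono {f f' : ℝ → ℝ} {s : Set ℝ} (hs : MeasurableSet s) (h : ∀ x ∈ s, f x ≤ f' x) :
    ERInt f s ≤ ERInt f' s :=
  EReal.sub_le_sub
    (EReal.coe_ennreal_le_coe_ennreal_iff.2
      (setLIntegral_mono' hs fun x hx => ENNReal.ofReal_le_ofReal (h x hx)))
    (EReal.coe_ennreal_le_coe_ennreal_iff.2
      (setLIntegral_mono' hs fun x hx => ENNReal.ofReal_le_ofReal (neg_le_neg (h x hx))))

lemma ERInt_eq_integral {f : ℝ → ℝ} {s : Set ℝ} (hf : IntegrableOn f s) :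
    ERInt f s = ((∫ x in s, f x : ℝ) : EReal) := by
  rw [integral_eq_lintegral_pos_part_sub_lintegral_neg_part hf, EReal.coe_sub,
    EReal.coe_ennreal_toReal hf.lintegral_lt_top.ne,
    EReal.coe_ennreal_toReal (show ∫⁻ x in s, ENNReal.ofReal (-f x) ≠ ∞ from
      hf.neg.lintegral_lt_top.ne)]
  rfl

lemma Fcon_le_coe_integral {g h : ℝ → ℝ} {u : RadW N R} {f : ℝ → ℝ}
    (hf : Integrable f (radialMeasure N R))
    (hle : ∀ r ∈ Ioc 0 R, g |u.u' r| + h (u.u r) ≤ f r) :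
    Fcon N R g h u ≤ ((∫ r, f r ∂radialMeasure N R : ℝ) : EReal) := by
  rw [integral_radialMeasure, ← ERInt_eq_integral (integrable_radialMeasure_iff.1 hf)]
  exact ERInt_mono measurableSet_Ioc fun r hr =>
    mul_le_mul_of_nonneg_left (hle r hr) (pow_nonneg hr.1.le _)

lemma coe_integral_le_Fcon {g h : ℝ → ℝ} {u : RadW N R} {f : ℝ → ℝ}
    (hf : Integrable f (radialMeasure N R))
    (hle : ∀ r ∈ Ioc 0 R, f r ≤ g |u.u' r| + h (u.u r)) :
    ((∫ r, f r ∂radialMeasure N R : ℝ) : EReal) ≤ Fcon N R g h u := by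
  rw [integral_radialMeasure, ← ERInt_eq_integral (integrable_radialMeasure_iff.1 hf)]
  exact ERInt_mono measurableSet_Ioc fun r hr =>
    mul_le_mul_of_nonneg_left (hle r hr) (pow_nonneg hr.1.le _)

end ExtendedIntegral

/-! ### Tail integrals -/

/-- The tail primitive `r ↦ ∫_r^R q`; the member of `𝒲` with derivative `q` is its negative. -/
def tailIntegral (R : ℝ) (q : ℝ → ℝ) (r : ℝ) : ℝ := ∫ ρ in Ioc r R, q ρ

section TailIntegral

variable {R : ℝ} {q p : ℝ → ℝ}

lemma tailIntegral_nonneg (hq : 0 ≤ q) (r : ℝ) : 0 ≤ tailIntegral R q r :=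
  integral_nonneg hq

lemma tailIntegral_anti (hq : 0 ≤ q) {r s : ℝ} (hqi : IntegrableOn q (Ioc r R)) (hrs : r ≤ s) :
    tailIntegral R q s ≤ tailIntegral R q r :=
  setIntegral_mono_set hqi (ae_of_all _ hq) (Ioc_subset_Ioc_left hrs).eventuallyLE

lemma tailIntegral_le_mul {K : ℝ} (hqK : ∀ x, q x ∈ Icc 0 K) {r : ℝ} (hr : r ∈ Ioc 0 R)
    (hqi : IntegrableOn q (Ioc r R)) : tailIntegral R q r ≤ R * K := by
  calc tailIntegral R q r ≤ ∫ _ in Ioc r R, K :=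
        setIntegral_mono hqi (by simp) fun x => (hqK x).2
    _ = (R - r) * K := by simp [hr.2]
    _ ≤ R * K := mul_le_mul_of_nonneg_right (sub_le_self R hr.1.le) ((hqK 0).1.trans (hqK 0).2)

lemma integrableOn_Ioc_of_monotone (hp : Monotone p) (a b : ℝ) : IntegrableOn p (Ioc a b) :=
  hp.intervalIntegrable.1

lemma tailIntegral_antitone_of_monotone (hp : Monotone p) (hp0 : 0 ≤ p) :
    Antitone (tailIntegral R p) :=
  fun r _ => tailIntegral_anti hp0 (integrableOn_Ioc_of_monotone hp r R)

lemma tailIntegral_sub_tailIntegral (hp : Monotone p) {x y : ℝ} (hxy : x ≤ y) (hyR : y ≤ R) :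
    tailIntegral R p x - tailIntegral R p y = ∫ t in Ioc x y, p t := by
  rw [tailIntegral, tailIntegral, ← Ioc_union_Ioc_eq_Ioc hxy hyR,
    setIntegral_union (Ioc_disjoint_Ioc_of_le le_rfl) measurableSet_Ioc
      (integrableOn_Ioc_of_monotone hp x y) (integrableOn_Ioc_of_monotone hp y R),
    add_sub_cancel_right]

lemma mul_sub_le_tailIntegral_sub (hp : Monotone p) {x y : ℝ} (hxy : x ≤ y) (hyR : y ≤ R) :
    p x * (y - x) ≤ tailIntegral R p x - tailIntegral R p y := by
  rw [tailIntegral_sub_tailIntegral hp hxy hyR]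
  calc p x * (y - x) = ∫ _ in Ioc x y, p x := by simp [hxy, mul_comm]
    _ ≤ ∫ t in Ioc x y, p t := setIntegral_mono_on (by simp) (integrableOn_Ioc_of_monotone hp x y)
        measurableSet_Ioc fun t ht => hp ht.1.le

lemma tailIntegral_sub_le_mul_sub (hp : Monotone p) {x y : ℝ} (hxy : x ≤ y) (hyR : y ≤ R) :
    tailIntegral R p x - tailIntegral R p y ≤ p y * (y - x) := by
  rw [tailIntegral_sub_tailIntegral hp hxy hyR]
  calc ∫ t in Ioc x y, p t ≤ ∫ _ in Ioc x y, p y := setIntegral_mono_on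
        (integrableOn_Ioc_of_monotone hp x y) (by simp) measurableSet_Ioc fun t ht => hp ht.2
    _ = p y * (y - x) := by simp [hxy, mul_comm]

lemma convexOn_neg_tailIntegral (hp : Monotone p) :
    ConvexOn ℝ (Iic R) fun r => -tailIntegral R p r := by
  refine convexOn_of_slope_mono_adjacent (convex_Iic R) fun {x y z} _ hz hxy hyz => ?_
  have hle := tailIntegral_sub_le_mul_sub hp hxy.le (hyz.le.trans hz)
  have hge := mul_sub_le_tailIntegral_sub hp hyz.le hz
  calc (-tailIntegral R p y - -tailIntegral R p x) / (y - x) ≤ p y := by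
        rw [div_le_iff₀ (sub_pos.2 hxy)]
        linarith
    _ ≤ (-tailIntegral R p z - -tailIntegral R p y) / (z - y) := by
        rw [le_div_iff₀ (sub_pos.2 hyz)]
        linarith

lemma continuousOn_tailIntegral (hp : Monotone p) : ContinuousOn (tailIntegral R p) (Iic R) := by
  have hcont : Continuous fun r => -∫ t in R..r, p t :=
    (intervalIntegral.continuous_primitive (fun _ _ => hp.intervalIntegrable) R).neg
  refine hcont.continuousOn.congr fun r hr => ?_
  change tailIntegral R p r = -∫ t in R..r, p t
  rw [← intervalIntegral.integral_symm, intervalIntegral.integral_of_le hr, tailIntegral]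

lemma exists_tailIntegral_eq_of_le (hp : Monotone p) (hp0 : 0 ≤ p) {a r : ℝ} (ha : 0 ≤ a)
    (hr : r ≤ R) (har : a ≤ tailIntegral R p r) :
    ∃ s ∈ Icc r R, tailIntegral R p s = a ∧ ∀ x ∈ Ioc s R, tailIntegral R p x < a := by
  have hcont : ContinuousOn (tailIntegral R p) (Icc r R) :=
    (continuousOn_tailIntegral hp).mono Icc_subset_Iic_self
  have hlevel : (Icc r R ∩ tailIntegral R p ⁻¹' {a}).Nonempty := by
    obtain ⟨s, hs, hsa⟩ := intermediate_value_Icc' hr hcont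
      (show a ∈ Icc (tailIntegral R p R) (tailIntegral R p r) from ⟨by simpa [tailIntegral], har⟩)
    exact ⟨s, hs, hsa⟩
  obtain ⟨s, ⟨hs, hsa⟩, hmax⟩ := (isCompact_Icc.of_isClosed_subset
    (hcont.preimage_isClosed_of_isClosed isClosed_Icc isClosed_singleton)
    inter_subset_left).exists_isGreatest hlevel
  refine ⟨s, hs, hsa, fun x hx => lt_of_le_of_ne ?_ fun hxa => ?_⟩
  · exact (tailIntegral_antitone_of_monotone hp hp0 hx.1.le).trans_eq hsa
  · exact (hmax ⟨⟨hs.1.trans hx.1.le, hx.2⟩, hxa⟩).not_gt hx.1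

/-- The slope of the truncation `max (-tailIntegral R p) (-a)`. -/
def cutSlope (R a : ℝ) (p : ℝ → ℝ) (r : ℝ) : ℝ := if tailIntegral R p r < a then p r else 0

lemma cutSlope_mem_Icc (hp0 : 0 ≤ p) (a r : ℝ) : cutSlope R a p r ∈ Icc 0 (p r) := by
  unfold cutSlope
  split_ifs
  · exact ⟨hp0 r, le_rfl⟩
  · exact ⟨le_rfl, hp0 r⟩

lemma cutSlope_monotone (hp : Monotone p) (hp0 : 0 ≤ p) (a : ℝ) : Monotone (cutSlope R a p) := by
  intro x y hxy
  by_cases hx : tailIntegral R p x < a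
  · have hy := (tailIntegral_antitone_of_monotone hp hp0 hxy).trans_lt hx
    rw [cutSlope, cutSlope, if_pos hx, if_pos hy]
    exact hp hxy
  · rw [cutSlope, if_neg hx]
    exact (cutSlope_mem_Icc hp0 a y).1

lemma tailIntegral_cutSlope (hp : Monotone p) (hp0 : 0 ≤ p) {a r : ℝ} (ha : 0 ≤ a) (hr : r ≤ R) :
    tailIntegral R (cutSlope R a p) r = min (tailIntegral R p r) a := by
  have hanti := tailIntegral_antitone_of_monotone (R := R) hp hp0
  rcases lt_or_ge (tailIntegral R p r) a with hlt | hge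
  · rw [min_eq_left hlt.le]
    exact setIntegral_congr_fun measurableSet_Ioc fun x hx =>
      if_pos ((hanti hx.1.le).trans_lt hlt)
  · obtain ⟨s, hs, hsa, hlt⟩ := exists_tailIntegral_eq_of_le hp hp0 ha hr hge
    calc tailIntegral R (cutSlope R a p) r = ∫ x in Ioc s R, cutSlope R a p x := by
          refine setIntegral_eq_of_subset_of_forall_sdiff_eq_zero measurableSet_Ioc
            (Ioc_subset_Ioc_left hs.1) fun x hx => if_neg ?_
          have hxs : x ≤ s := not_lt.1 fun hsx => hx.2 ⟨hsx, hx.1.2⟩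
          exact (hsa.symm.trans_le (hanti hxs)).not_gt
      _ = tailIntegral R p s := setIntegral_congr_fun measurableSet_Ioc fun x hx =>
          if_pos (hlt x hx)
      _ = min (tailIntegral R p r) a := by rw [hsa, min_eq_right hge]

end TailIntegral

/-! ### Duality between tail integrals and radial fluxes -/

/-- The kernel `a(r) d(ρ) 1_{r < ρ}`, whose two iterated integrals over `(0, R]²` express the
integral of `a` against the tail primitive of `d`. -/
def tailKernel (a d : ℝ → ℝ) (z : ℝ × ℝ) : ℝ := if z.1 < z.2 then a z.1 * d z.2 else 0

/-- The solution `φ` of `(r ^ (N - 1) φ)' = r ^ (N - 1) ψ` that is regular at the origin: the mean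
flux through the sphere of radius `ρ` of a radial vector field with divergence `ψ`. -/
def radialFlux (N : ℕ) (ψ : ℝ → ℝ) (ρ : ℝ) : ℝ := (∫ r in Ioc 0 ρ, r ^ (N - 1) * ψ r) / ρ ^ (N - 1)

section TailKernel

variable {R : ℝ} {a d : ℝ → ℝ}

lemma integral_tailKernel_snd (a d : ℝ → ℝ) {r : ℝ} (hr : 0 < r) :
    ∫ ρ in Ioc 0 R, tailKernel a d (r, ρ) = a r * tailIntegral R d r := by
  have hkernel : (fun ρ => tailKernel a d (r, ρ)) = (Ioi r).indicator fun ρ => a r * d ρ := by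
    ext ρ
    simp [tailKernel, indicator]
  rw [hkernel, setIntegral_indicator measurableSet_Ioi, Ioc_inter_Ioi, max_eq_right hr.le,
    integral_const_mul, tailIntegral]

lemma integral_tailKernel_fst (a d : ℝ → ℝ) {ρ : ℝ} (hρ : ρ ≤ R) :
    ∫ r in Ioc 0 R, tailKernel a d (r, ρ) = d ρ * ∫ r in Ioc 0 ρ, a r := by
  have hkernel : (fun r => tailKernel a d (r, ρ)) = (Iio ρ).indicator fun r => d ρ * a r := by
    ext r
    simp [tailKernel, indicator, mul_comm]
  have hinter : Ioc 0 R ∩ Iio ρ = Ioo 0 ρ := by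
    ext x
    exact ⟨fun hx => ⟨hx.1.1, hx.2⟩, fun hx => ⟨⟨hx.1, hx.2.le.trans hρ⟩, hx.2⟩⟩
  rw [hkernel, setIntegral_indicator measurableSet_Iio, hinter, integral_const_mul,
    integral_Ioc_eq_integral_Ioo]

lemma integrable_tailKernel (ha : AEStronglyMeasurable a (volume.restrict (Ioc 0 R)))
    (hd : AEStronglyMeasurable d (volume.restrict (Ioc 0 R))) {D : ℝ → ℝ}
    (hD : IntegrableOn D (Ioc 0 R))
    (hbound : ∀ r ρ, 0 < r → r < ρ → ρ ≤ R → ‖a r * d ρ‖ ≤ ‖D ρ‖) :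
    Integrable (tailKernel a d)
      ((volume.restrict (Ioc 0 R)).prod (volume.restrict (Ioc 0 R))) := by
  have hmeas : AEStronglyMeasurable (tailKernel a d)
      ((volume.restrict (Ioc 0 R)).prod (volume.restrict (Ioc 0 R))) :=
    (ha.comp_fst.mul hd.comp_snd).indicator (measurableSet_lt measurable_fst measurable_snd)
  refine (hD.comp_snd (volume.restrict (Ioc 0 R))).mono hmeas ?_
  rw [Measure.prod_restrict]
  filter_upwards [ae_restrict_mem (measurableSet_Ioc.prod measurableSet_Ioc)] with z hz
  unfold tailKernel
  split_ifs with hlt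
  · exact hbound z.1 z.2 hz.1.1 hlt hz.2.2
  · simp

end TailKernel

section Duality

variable {N : ℕ} {R B : ℝ} {ψ d : ℝ → ℝ}

lemma integrable_tailKernel_weighted (hψ : AEStronglyMeasurable ψ (radialMeasure N R))
    (hψB : ∀ r, |ψ r| ≤ B) (hd : Integrable d (radialMeasure N R)) :
    Integrable (tailKernel (fun r => r ^ (N - 1) * ψ r) d)
      ((volume.restrict (Ioc 0 R)).prod (volume.restrict (Ioc 0 R))) := by
  have hac := absolutelyContinuous_radialMeasure N R
  refine integrable_tailKernel
    ((continuous_pow _).aestronglyMeasurable.mul (hψ.mono_ac hac))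
    (hd.aestronglyMeasurable.mono_ac hac) ((integrable_radialMeasure_iff.1 hd).const_mul B)
    fun r ρ hr hrρ _ => ?_
  have hB : 0 ≤ B := (abs_nonneg _).trans (hψB 0)
  have hρ : 0 < ρ := hr.trans hrρ
  simp only [norm_mul, norm_pow, Real.norm_eq_abs, abs_of_pos hr, abs_of_pos hρ,
    abs_of_nonneg hB]
  calc r ^ (N - 1) * |ψ r| * |d ρ| ≤ ρ ^ (N - 1) * B * |d ρ| := by
        gcongr
        exact hψB r
    _ = B * (ρ ^ (N - 1) * |d ρ|) := by ring

lemma integrable_mul_tailIntegral (hψ : AEStronglyMeasurable ψ (radialMeasure N R))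
    (hψB : ∀ r, |ψ r| ≤ B) (hd : Integrable d (radialMeasure N R)) :
    Integrable (fun r => ψ r * tailIntegral R d r) (radialMeasure N R) := by
  refine integrable_radialMeasure_iff.2
    ((integrable_tailKernel_weighted hψ hψB hd).integral_prod_left.congr ?_)
  filter_upwards [ae_restrict_mem measurableSet_Ioc] with r hr
  rw [integral_tailKernel_snd _ d hr.1, mul_assoc]

theorem integral_mul_tailIntegral_eq (hψ : AEStronglyMeasurable ψ (radialMeasure N R))
    (hψB : ∀ r, |ψ r| ≤ B) (hd : Integrable d (radialMeasure N R)) :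
    ∫ r, ψ r * tailIntegral R d r ∂radialMeasure N R =
      ∫ ρ, d ρ * radialFlux N ψ ρ ∂radialMeasure N R := by
  rw [integral_radialMeasure, integral_radialMeasure]
  set a : ℝ → ℝ := fun r => r ^ (N - 1) * ψ r
  calc ∫ r in Ioc 0 R, r ^ (N - 1) * (ψ r * tailIntegral R d r)
      = ∫ r in Ioc 0 R, ∫ ρ in Ioc 0 R, tailKernel a d (r, ρ) :=
        setIntegral_congr_fun measurableSet_Ioc fun r hr => by
          simp only [integral_tailKernel_snd a d hr.1, a, mul_assoc]
    _ = ∫ ρ in Ioc 0 R, ∫ r in Ioc 0 R, tailKernel a d (r, ρ) :=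
        integral_integral_swap (f := fun r ρ => tailKernel a d (r, ρ))
          (integrable_tailKernel_weighted hψ hψB hd)
    _ = ∫ ρ in Ioc 0 R, ρ ^ (N - 1) * (d ρ * radialFlux N ψ ρ) :=
        setIntegral_congr_fun measurableSet_Ioc fun ρ hρ => by
          have hpow : ρ ^ (N - 1) ≠ 0 := (pow_pos hρ.1 _).ne'
          simp only [integral_tailKernel_fst a d hρ.2, radialFlux, a]
          field_simp

end Duality

section RadialFlux

variable {N : ℕ} {ψ : ℝ → ℝ}

lemma radialFlux_of_nonpos (N : ℕ) (ψ : ℝ → ℝ) {ρ : ℝ} (hρ : ρ ≤ 0) : radialFlux N ψ ρ = 0 := by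
  rw [radialFlux, Ioc_eq_empty hρ.not_gt, setIntegral_empty, zero_div]

lemma radialFlux_nonneg (hψ : 0 ≤ ψ) : 0 ≤ radialFlux N ψ := by
  intro ρ
  rcases le_or_gt ρ 0 with hρ | hρ
  · exact (radialFlux_of_nonpos N ψ hρ).ge
  · exact div_nonneg (setIntegral_nonneg measurableSet_Ioc fun r hr =>
      mul_nonneg (pow_nonneg hr.1.le _) (hψ r)) (pow_nonneg hρ.le _)

lemma radialFlux_eq_mul_integral (N : ℕ) (ψ : ℝ → ℝ) {ρ : ℝ} (hρ : 0 < ρ) :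
    radialFlux N ψ ρ = ρ * ∫ t in Ioc 0 1, t ^ (N - 1) * ψ (ρ * t) := by
  have hpow : ρ ^ (N - 1) ≠ 0 := (pow_pos hρ _).ne'
  have hscale := intervalIntegral.mul_integral_comp_mul_left (a := 0) (b := 1)
    (f := fun r => r ^ (N - 1) * ψ r) (c := ρ)
  simp only [mul_zero, mul_one, mul_pow, mul_assoc, intervalIntegral.integral_const_mul] at hscale
  rw [radialFlux, ← intervalIntegral.integral_of_le hρ.le,
    ← intervalIntegral.integral_of_le zero_le_one, ← hscale]
  field_simp

lemma radialFlux_monotone (hψ : Monotone ψ) (hψ0 : 0 ≤ ψ) : Monotone (radialFlux N ψ) := by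
  intro r s hrs
  rcases le_or_gt r 0 with hr | hr
  · exact (radialFlux_of_nonpos N ψ hr).trans_le (radialFlux_nonneg hψ0 s)
  have hint : ∀ ρ, 0 < ρ → IntegrableOn (fun t => t ^ (N - 1) * ψ (ρ * t)) (Ioc 0 1) :=
    fun ρ hρ => (Monotone.intervalIntegrable fun _ _ hxy =>
      hψ (mul_le_mul_of_nonneg_left hxy hρ.le)).continuousOn_mul (by fun_prop) |>.1
  rw [radialFlux_eq_mul_integral N ψ hr, radialFlux_eq_mul_integral N ψ (hr.trans_le hrs)]
  refine mul_le_mul hrs ?_ (setIntegral_nonneg measurableSet_Ioc fun t ht =>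
    mul_nonneg (pow_nonneg ht.1.le _) (hψ0 _)) (hr.le.trans hrs)
  refine setIntegral_mono_on (hint r hr) (hint s (hr.trans_le hrs)) measurableSet_Ioc
    fun t ht => mul_le_mul_of_nonneg_left (hψ ?_) (pow_nonneg ht.1.le _)
  exact mul_le_mul_of_nonneg_right hrs ht.1.le

lemma radialFlux_const (hN : 1 ≤ N) (c : ℝ) {ρ : ℝ} (hρ : 0 < ρ) :
    radialFlux N (fun _ => c) ρ = c * ρ / N := by
  obtain ⟨n, rfl⟩ := Nat.exists_eq_add_of_le' hN
  rw [radialFlux_eq_mul_integral _ _ hρ, ← intervalIntegral.integral_of_le zero_le_one,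
    intervalIntegral.integral_mul_const, integral_pow]
  simp only [Nat.add_sub_cancel, one_pow, zero_pow n.succ_ne_zero, sub_zero, Nat.cast_add_one]
  ring

end RadialFlux

/-! ### The reduced problem for bounded nonnegative slopes -/

/-- The slopes of the reduced problem: nonnegative, bounded by `K` and subject to the gradient
constraint `μ`. -/
structure IsAdmissibleSlope (N : ℕ) (R K : ℝ) (μ : ℝ → ℝ≥0∞) (q : ℝ → ℝ) : Prop where
  aemeasurable : AEMeasurable q (radialMeasure N R)
  mem_Icc : ∀ x, q x ∈ Icc 0 K
  le_bound : ∀ᵐ x ∂radialMeasure N R, ENNReal.ofReal (q x) ≤ μ x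

/-- The functional `F` at the member of `𝒲` with slope `q`, with integrands `γ` and `k` in place of
`g` and `h`. -/
def reducedEnergy (N : ℕ) (R : ℝ) (γ k : ℝ → ℝ) (q : ℝ → ℝ) : ℝ :=
  ∫ r, γ (q r) + k (-tailIntegral R q r) ∂radialMeasure N R

namespace IsAdmissibleSlope

variable {N : ℕ} {R K : ℝ} {μ : ℝ → ℝ≥0∞} {q γ k : ℝ → ℝ}

lemma nonneg (hq : IsAdmissibleSlope N R K μ q) : 0 ≤ q := fun x => (hq.mem_Icc x).1

lemma integrable (hq : IsAdmissibleSlope N R K μ q) : Integrable q (radialMeasure N R) :=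
  .of_bound hq.aemeasurable.aestronglyMeasurable K <| ae_of_all _ fun x => by
    simpa only [Real.norm_of_nonneg (hq.nonneg x)] using (hq.mem_Icc x).2

lemma neg_tailIntegral_mem_Icc (hq : IsAdmissibleSlope N R K μ q) {r : ℝ} (hr : r ∈ Ioc 0 R) :
    -tailIntegral R q r ∈ Icc (-(R * K)) 0 :=
  ⟨neg_le_neg (tailIntegral_le_mul hq.mem_Icc hr
      (integrableOn_Ioc_of_integrable_radialMeasure hq.integrable hr.1)),
    neg_nonpos.2 (tailIntegral_nonneg hq.nonneg r)⟩

lemma aemeasurable_tailIntegral (hq : IsAdmissibleSlope N R K μ q) :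
    AEMeasurable (tailIntegral R q) (radialMeasure N R) :=
  (aemeasurable_restrict_of_antitoneOn measurableSet_Ioc fun _ hr _ _ hrs => tailIntegral_anti
    hq.nonneg (integrableOn_Ioc_of_integrable_radialMeasure hq.integrable hr.1) hrs).mono_ac
    (radialMeasure_absolutelyContinuous N R)

lemma integrable_comp (hq : IsAdmissibleSlope N R K μ q) (hγ : Continuous γ) :
    Integrable (fun r => γ (q r)) (radialMeasure N R) := by
  obtain ⟨C, hC⟩ := isCompact_Icc.exists_bound_of_continuousOn (hγ.continuousOn (s := Icc 0 K))
  exact .of_bound (hγ.measurable.comp_aemeasurable hq.aemeasurable).aestronglyMeasurable C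
    (ae_of_all _ fun x => hC _ (hq.mem_Icc x))

lemma integrable_comp_neg_tailIntegral (hq : IsAdmissibleSlope N R K μ q) (hk : Continuous k) :
    Integrable (fun r => k (-tailIntegral R q r)) (radialMeasure N R) := by
  obtain ⟨C, hC⟩ := isCompact_Icc.exists_bound_of_continuousOn
    (hk.continuousOn (s := Icc (-(R * K)) 0))
  refine .of_bound
    (hk.measurable.comp_aemeasurable hq.aemeasurable_tailIntegral.neg).aestronglyMeasurable C ?_
  filter_upwards [ae_radialMeasure_mem_Ioc N R] with r hr
  exact hC _ (hq.neg_tailIntegral_mem_Icc hr)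

end IsAdmissibleSlope

section EnergyRearrangement

variable {N : ℕ} {R K : ℝ} {μ : ℝ → ℝ≥0∞} {p q γ k : ℝ → ℝ}

lemma exists_monotone_subgradient (hk : ConvexOn ℝ univ k) :
    ∃ s : ℝ → ℝ, Monotone s ∧ ∀ x y, k x + s x * (y - x) ≤ k y := by
  refine ⟨fun x => derivWithin k (Ioi x) x,
    monotoneOn_univ.1 (by simpa only [interior_univ] using hk.monotoneOn_rightDeriv),
    fun x y => ?_⟩
  rcases lt_trichotomy x y with hxy | rfl | hyx
  · have hslope := hk.rightDeriv_le_slope (mem_univ x) (mem_univ y) hxy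
      (hk.differentiableWithinAt_Ioi_of_mem_interior (by simp))
    rw [slope_def_field, le_div_iff₀ (sub_pos.2 hxy)] at hslope
    linarith
  · simp
  · have hslope := (hk.slope_le_leftDeriv (mem_univ y) (mem_univ x) hyx
      (hk.differentiableWithinAt_Iio_of_mem_interior (by simp))).trans
      (hk.leftDeriv_le_rightDeriv_of_mem_interior (by simp))
    rw [slope_def_field, div_le_iff₀ (sub_pos.2 hyx)] at hslope
    linarith

lemma integral_mul_tailIntegral_le_of_identDistrib (hp : Monotone p)
    (hpa : IsAdmissibleSlope N R K μ p) (hqa : IsAdmissibleSlope N R K μ q)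
    (hpq : IdentDistrib p q (radialMeasure N R) (radialMeasure N R)) {ψ : ℝ → ℝ} {B : ℝ}
    (hψ : Monotone ψ) (hψB : ∀ r, ψ r ∈ Icc 0 B) :
    ∫ r, ψ r * tailIntegral R q r ∂radialMeasure N R ≤
      ∫ r, ψ r * tailIntegral R p r ∂radialMeasure N R := by
  have hψ0 : 0 ≤ ψ := fun r => (hψB r).1
  have hψ_abs : ∀ r, |ψ r| ≤ B := fun r => (abs_of_nonneg (hψ0 r)).trans_le (hψB r).2
  have hψm := hψ.measurable.aestronglyMeasurable (μ := radialMeasure N R)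
  have hφ : Monotone (radialFlux N ψ) := radialFlux_monotone hψ hψ0
  have hφ0 : 0 ≤ radialFlux N ψ := radialFlux_nonneg hψ0
  have hpφ : Integrable (fun r => p r * radialFlux N ψ r) (radialMeasure N R) := by
    refine hpa.integrable.mul_bdd (c := radialFlux N ψ R) hφ.measurable.aestronglyMeasurable ?_
    filter_upwards [ae_radialMeasure_mem_Ioc N R] with r hr
    exact (Real.norm_of_nonneg (hφ0 r)).trans_le (hφ hr.2)
  rw [integral_mul_tailIntegral_eq hψm hψ_abs hqa.integrable,
    integral_mul_tailIntegral_eq hψm hψ_abs hpa.integrable]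
  exact integral_mul_le_of_identDistrib_of_monotone hp hpa.nonneg hqa.nonneg hpq hφ hφ0 hpφ

theorem reducedEnergy_le_of_identDistrib (hγ : Continuous γ) (hk : ConvexOn ℝ univ k)
    (hkm : Monotone k) (hp : Monotone p) (hpa : IsAdmissibleSlope N R K μ p)
    (hqa : IsAdmissibleSlope N R K μ q)
    (hpq : IdentDistrib p q (radialMeasure N R) (radialMeasure N R)) :
    reducedEnergy N R γ k p ≤ reducedEnergy N R γ k q := by
  obtain ⟨s, hs, hsub⟩ := exists_monotone_subgradient hk
  have hs0 : ∀ x, 0 ≤ s x := fun x => by linarith [hsub x (x - 1), hkm (sub_one_lt x).le]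
  set ψ : ℝ → ℝ := fun r => s (-tailIntegral R p r)
  have hψ : Monotone ψ := fun x y hxy =>
    hs (neg_le_neg (tailIntegral_antitone_of_monotone hp hpa.nonneg hxy))
  have hψB : ∀ r, ψ r ∈ Icc 0 (s 0) := fun r =>
    ⟨hs0 _, hs (neg_nonpos.2 (tailIntegral_nonneg hpa.nonneg r))⟩
  have hψ_abs : ∀ r, |ψ r| ≤ s 0 := fun r => (abs_of_nonneg (hψB r).1).trans_le (hψB r).2
  have hψm := hψ.measurable.aestronglyMeasurable (μ := radialMeasure N R)
  have hkc : Continuous k := hk.locallyLipschitz.continuous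
  have hψp := integrable_mul_tailIntegral hψm hψ_abs hpa.integrable
  have hψq := integrable_mul_tailIntegral hψm hψ_abs hqa.integrable
  have hkp := hpa.integrable_comp_neg_tailIntegral hkc
  have hkq := hqa.integrable_comp_neg_tailIntegral hkc
  have hγ_eq : ∫ r, γ (p r) ∂radialMeasure N R = ∫ r, γ (q r) ∂radialMeasure N R :=
    (hpq.comp hγ.measurable).integral_eq
  have hsub_int : ∫ r, k (-tailIntegral R p r) + ψ r * tailIntegral R p r ∂radialMeasure N R ≤
      ∫ r, k (-tailIntegral R q r) + ψ r * tailIntegral R q r ∂radialMeasure N R :=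
    integral_mono (hkp.add hψp) (hkq.add hψq) fun r => by
      linarith [hsub (-tailIntegral R p r) (-tailIntegral R q r)]
  rw [integral_add hkp hψp, integral_add hkq hψq] at hsub_int
  rw [reducedEnergy, reducedEnergy, integral_add (hpa.integrable_comp hγ) hkp,
    integral_add (hqa.integrable_comp hγ) hkq]
  linarith [integral_mul_tailIntegral_le_of_identDistrib hp hpa hqa hpq hψ hψB]

end EnergyRearrangement

section Existence

variable {N : ℕ} {R K : ℝ} {μ : ℝ → ℝ≥0∞} {p γ k : ℝ → ℝ} {f : ℕ → ℝ → ℝ}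

lemma tendsto_tailIntegral (hf : ∀ n, IsAdmissibleSlope N R K μ (f n))
    (hlim : ∀ᵐ x, Tendsto (fun n => f n x) atTop (𝓝 (p x))) {r : ℝ} (hr : r ∈ Ioc 0 R) :
    Tendsto (fun n => tailIntegral R (f n) r) atTop (𝓝 (tailIntegral R p r)) :=
  tendsto_integral_of_dominated_convergence (fun _ => K)
    (fun n => (integrableOn_Ioc_of_integrable_radialMeasure (hf n).integrable
      hr.1).aestronglyMeasurable)
    (integrable_const K)
    (fun n => ae_of_all _ fun x =>
      (Real.norm_of_nonneg ((hf n).nonneg x)).trans_le ((hf n).mem_Icc x).2)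
    (ae_restrict_of_ae hlim)

lemma tendsto_reducedEnergy (hγ : Continuous γ) (hk : Continuous k)
    (hf : ∀ n, IsAdmissibleSlope N R K μ (f n))
    (hlim : ∀ᵐ x, Tendsto (fun n => f n x) atTop (𝓝 (p x))) :
    Tendsto (fun n => reducedEnergy N R γ k (f n)) atTop (𝓝 (reducedEnergy N R γ k p)) := by
  obtain ⟨C, hC⟩ := isCompact_Icc.exists_bound_of_continuousOn (hγ.continuousOn (s := Icc 0 K))
  obtain ⟨D, hD⟩ := isCompact_Icc.exists_bound_of_continuousOn
    (hk.continuousOn (s := Icc (-(R * K)) 0))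
  refine tendsto_integral_of_dominated_convergence (fun _ => C + D)
    (fun n => (((hf n).integrable_comp hγ).add
      ((hf n).integrable_comp_neg_tailIntegral hk)).aestronglyMeasurable)
    (integrable_const _) (fun n => ?_) ?_
  · filter_upwards [ae_radialMeasure_mem_Ioc N R] with r hr
    exact norm_add_le_of_le (hC _ ((hf n).mem_Icc r)) (hD _ ((hf n).neg_tailIntegral_mem_Icc hr))
  · have hlim' := (radialMeasure_absolutelyContinuous N R).ae_le (ae_restrict_of_ae hlim)
    filter_upwards [ae_radialMeasure_mem_Ioc N R, hlim'] with r hr hfr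
    exact ((hγ.tendsto _).comp hfr).add ((hk.tendsto _).comp (tendsto_tailIntegral hf hlim hr).neg)

lemma isAdmissibleSlope_of_tendsto (hf : ∀ n, IsAdmissibleSlope N R K μ (f n))
    (hlim : ∀ᵐ x, Tendsto (fun n => f n x) atTop (𝓝 (p x))) (hp : Monotone p)
    (hpK : ∀ x, p x ∈ Icc 0 K) : IsAdmissibleSlope N R K μ p where
  aemeasurable := hp.measurable.aemeasurable
  mem_Icc := hpK
  le_bound := by
    have hlim' := (radialMeasure_absolutelyContinuous N R).ae_le (ae_restrict_of_ae hlim)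
    filter_upwards [ae_all_iff.2 fun n => (hf n).le_bound, hlim'] with x hfx hx
    exact le_of_tendsto' (ENNReal.tendsto_ofReal hx) hfx

lemma exists_monotone_minimizer_of_monotone (hK : 0 ≤ K) (hγ : Continuous γ) (hk : Continuous k) :
    ∃ p, Monotone p ∧ IsAdmissibleSlope N R K μ p ∧ ∀ q, Monotone q →
      IsAdmissibleSlope N R K μ q → reducedEnergy N R γ k p ≤ reducedEnergy N R γ k q := by
  set S := {q | Monotone q ∧ IsAdmissibleSlope N R K μ q}
  have hcompact : IsSeqCompact (reducedEnergy N R γ k '' S) := by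
    intro x hx
    choose f hfS hfx using hx
    obtain ⟨p, hp, hpK, φ, hφ, hlim⟩ := exists_subseq_ae_tendsto_of_monotone
      (fun n => (hfS n).1) fun n => (hfS n).2.mem_Icc
    have hfφ : ∀ n, IsAdmissibleSlope N R K μ (f (φ n)) := fun n => (hfS (φ n)).2
    refine ⟨_, ⟨p, ⟨hp, isAdmissibleSlope_of_tendsto hfφ hlim hp hpK⟩, rfl⟩, φ, hφ, ?_⟩
    simpa only [Function.comp_def, hfx] using tendsto_reducedEnergy hγ hk hfφ hlim
  have hzero : (0 : ℝ → ℝ) ∈ S :=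
    ⟨monotone_const, measurable_const.aemeasurable, fun _ => ⟨le_rfl, hK⟩, by simp⟩
  obtain ⟨_, ⟨p, ⟨hp, hpa⟩, rfl⟩, hmin⟩ := hcompact.isCompact.exists_isLeast ⟨_, 0, hzero, rfl⟩
  exact ⟨p, hp, hpa, fun q hq hqa => hmin ⟨q, ⟨hq, hqa⟩, rfl⟩⟩

theorem exists_monotone_minimizer (hK : 0 ≤ K) (hμ : MonotoneOn μ (Ioc 0 R)) (hγ : Continuous γ)
    (hk : ConvexOn ℝ univ k) (hkm : Monotone k) :
    ∃ p, Monotone p ∧ IsAdmissibleSlope N R K μ p ∧ ∀ q, IsAdmissibleSlope N R K μ q →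
      reducedEnergy N R γ k p ≤ reducedEnergy N R γ k q := by
  obtain ⟨p, hp, hpa, hmin⟩ := exists_monotone_minimizer_of_monotone (N := N) (R := R) (μ := μ)
    hK hγ hk.locallyLipschitz.continuous
  refine ⟨p, hp, hpa, fun q hqa => ?_⟩
  obtain ⟨q', hq', hq'K, hident, hq'μ⟩ := exists_monotone_identDistrib hqa.aemeasurable
    hqa.mem_Icc hμ (ae_radialMeasure_mem_Ioc N R) hqa.le_bound
  have hq'a : IsAdmissibleSlope N R K μ q' := ⟨hident.aemeasurable_fst, hq'K, hq'μ⟩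
  exact (hmin q' hq' hq'a).trans (reducedEnergy_le_of_identDistrib hγ hk hkm hq' hq'a hqa hident)

end Existence

/-! ### One-sided derivatives and growth of the convex integrands -/

section OneSidedDerivatives

variable {h : ℝ → ℝ}

lemma leftD_eq_derivWithin (hh : ConvexOn ℝ univ h) : leftD h = derivWithin h (Iio 0) 0 := by
  rw [hh.leftDeriv_eq_sSup_slope_of_mem_interior (by simp)]
  simp [leftD, slope_fun_def_field, Iio_def]

lemma rightD_eq_derivWithin (hh : ConvexOn ℝ univ h) : rightD h = derivWithin h (Ioi 0) 0 := by
  rw [hh.rightDeriv_eq_sInf_slope_of_mem_interior (by simp)]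
  simp [rightD, slope_fun_def_field, Ioi_def]

lemma leftD_le_rightD (hh : ConvexOn ℝ univ h) : leftD h ≤ rightD h := by
  rw [leftD_eq_derivWithin hh, rightD_eq_derivWithin hh]
  exact hh.leftDeriv_le_rightDeriv_of_mem_interior (by simp)

lemma apply_zero_le_of_rightD_nonneg (hh : ConvexOn ℝ univ h) (hr : 0 ≤ rightD h) {t : ℝ}
    (ht : 0 ≤ t) : h 0 ≤ h t := by
  rcases ht.eq_or_lt with rfl | ht
  · rfl
  have hslope : rightD h ≤ slope h 0 t := by
    rw [rightD_eq_derivWithin hh]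
    exact hh.rightDeriv_le_slope_of_mem_interior (by simp) (mem_univ t) ht
  rw [slope_def_field, le_div_iff₀ (sub_pos.2 ht)] at hslope
  nlinarith

lemma sub_le_leftD_mul_sub (hh : ConvexOn ℝ univ h) {w v : ℝ} (hwv : w ≤ v) (hv : v ≤ 0) :
    h v - h w ≤ leftD h * (v - w) := by
  rcases hwv.eq_or_lt with rfl | hwv
  · simp
  have hslope : slope h w v ≤ leftD h := by
    rw [leftD_eq_derivWithin hh]
    exact (hh.slope_le_leftDeriv_of_mem_interior (mem_univ w) (by simp) hwv).trans
      (hh.monotoneOn_leftDeriv (by simp) (by simp) hv)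
  rwa [slope_def_field, div_le_iff₀ (sub_pos.2 hwv)] at hslope

end OneSidedDerivatives

section TruncatedPotential

variable {h : ℝ → ℝ} {a z : ℝ}

lemma monotoneOn_Ici_of_isMinOn (hh : ConvexOn ℝ univ h) (hr : 0 ≤ rightD h) (hz : z ∈ Icc a 0)
    (hmin : IsMinOn h (Icc a 0) z) : MonotoneOn h (Ici z) := by
  intro x hzx y _ hxy
  have hzy : h z ≤ h y := by
    rcases le_total y 0 with hy | hy
    · exact hmin ⟨hz.1.trans (hzx.trans hxy), hy⟩
    · exact (hmin ⟨hz.1.trans hz.2, le_rfl⟩).trans (apply_zero_le_of_rightD_nonneg hh hr hy)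
  exact (hh.le_max_of_mem_Icc (mem_univ z) (mem_univ y) ⟨hzx, hxy⟩).trans_eq (max_eq_right hzy)

lemma monotone_comp_max (hh : MonotoneOn h (Ici z)) : Monotone fun t => h (max t z) :=
  fun _ _ hst =>
    hh (mem_Ici.2 (le_max_right _ _)) (mem_Ici.2 (le_max_right _ _)) (max_le_max_right z hst)

lemma convexOn_comp_max (hh : ConvexOn ℝ univ h) (hm : MonotoneOn h (Ici z)) :
    ConvexOn ℝ univ fun t => h (max t z) := by
  have himage : (fun t => max t z) '' univ = Ici z := by
    ext x
    simp only [mem_image, mem_univ, true_and, mem_Ici]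
    exact ⟨fun ⟨t, ht⟩ => ht ▸ le_max_right t z, fun hx => ⟨x, max_eq_left hx⟩⟩
  refine ConvexOn.comp (g := h) (himage ▸ hh.subset (subset_univ _) (convex_Ici z))
    ((convexOn_id convex_univ).sup (convexOn_const z convex_univ)) (himage ▸ hm)

lemma comp_max_le_of_isMinOn (hmin : IsMinOn h (Icc a 0) z) {v : ℝ} (hv : v ∈ Icc a 0) :
    h (max v z) ≤ h v := by
  rcases le_total v z with hvz | hzv
  · rw [max_eq_right hvz]
    exact hmin hv
  · rw [max_eq_left hzv]

lemma comp_max_le_add_mul (hh : ConvexOn ℝ univ h) (hr : 0 ≤ rightD h) (hz : z ∈ Icc a 0)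
    (hmin : IsMinOn h (Icc a 0) z) {v w δ : ℝ} (hv : v ∈ Icc a 0) (hδ : 0 ≤ δ) (hw : v - δ ≤ w) :
    h (max v z) ≤ h w + max (leftD h) 0 * δ := by
  have hpos : 0 ≤ max (leftD h) 0 * δ := mul_nonneg (le_max_right _ _) hδ
  rcases le_or_gt w v with hwv | hvw
  · calc h (max v z) ≤ h v := comp_max_le_of_isMinOn hmin hv
      _ ≤ h w + leftD h * (v - w) := by linarith [sub_le_leftD_mul_sub hh hwv hv.2]
      _ ≤ h w + max (leftD h) 0 * δ := by
        gcongr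
        · exact le_max_left _ _
        · linarith
  · have hmono := monotone_comp_max (monotoneOn_Ici_of_isMinOn hh hr hz hmin) hvw.le
    refine (hmono.trans ?_).trans (le_add_of_nonneg_right hpos)
    rcases le_or_gt w 0 with hw0 | hw0
    · exact comp_max_le_of_isMinOn hmin ⟨hv.1.trans hvw.le, hw0⟩
    · exact (congrArg h (max_eq_left (hz.2.trans hw0.le))).le

end TruncatedPotential

section Growth

variable {g : ℝ → ℝ}

lemma monotoneOn_of_convexOn_comp_abs (hg : ConvexOn ℝ univ fun z => g |z|) :
    MonotoneOn g (Ici 0) := by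
  intro a ha b hb hab
  have hle := hg.le_max_of_mem_Icc (mem_univ (-b)) (mem_univ b)
    ⟨(neg_nonpos.2 hb).trans ha, hab⟩
  simpa only [abs_neg, max_self, abs_of_nonneg (mem_Ici.1 ha), abs_of_nonneg (mem_Ici.1 hb)]
    using hle

lemma exists_mul_sub_le_of_lt_MconstE (hg : ConvexOn ℝ univ fun z => g |z|) {κ : ℝ}
    (hκ : (κ : EReal) < MconstE g) : ∃ K > 0, ∀ s ≥ K, κ * (s - K) ≤ g s - g K := by
  obtain ⟨σ, hκσ, hσM⟩ := EReal.lt_iff_exists_real_btwn.1 hκ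
  replace hκσ : 0 < σ - κ := sub_pos.2 (EReal.coe_lt_coe_iff.1 hκσ)
  obtain ⟨K, ⟨hσK, hK⟩, hgK⟩ := ((eventually_lt_of_lt_liminf hσM).and (eventually_gt_atTop 0)
    |>.and (eventually_ge_atTop (g 0 / (σ - κ)))).exists
  rw [EReal.coe_lt_coe_iff, lt_div_iff₀ hK] at hσK
  rw [div_le_iff₀ hκσ] at hgK
  refine ⟨K, hK, fun s hs => ?_⟩
  rcases hs.eq_or_lt with rfl | hs
  · simp
  have hslope := hg.slope_mono_adjacent (mem_univ 0) (mem_univ s) hK hs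
  simp only [abs_zero, abs_of_pos hK, abs_of_pos (hK.trans hs), sub_zero] at hslope
  rw [← le_div_iff₀ (sub_pos.2 hs)]
  refine le_trans ?_ hslope
  rw [le_div_iff₀ hK]
  linarith

lemma max_leftD_mul_div_lt_MconstE {N : ℕ} (hN : 1 ≤ N) {R : ℝ} (hR : 0 ≤ R) {h : ℝ → ℝ}
    (hh : ConvexOn ℝ univ h)
    (hhg : ((min |leftD h| |rightD h| * R : ℝ) : EReal) < ((N : ℝ) : EReal) * MconstE g) :
    ((max (leftD h) 0 * R / N : ℝ) : EReal) < MconstE g := by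
  have hmax : max (leftD h) 0 ≤ min |leftD h| |rightD h| :=
    max_le (le_min (le_abs_self _) ((leftD_le_rightD hh).trans (le_abs_self _)))
      (le_min (abs_nonneg _) (abs_nonneg _))
  have hN0 : (0 : EReal) < ((N : ℝ) : EReal) := by exact_mod_cast hN
  rw [EReal.coe_div, EReal.div_lt_iff hN0 (EReal.coe_ne_top _), mul_comm (MconstE g)]
  exact (EReal.coe_le_coe_iff.2 (mul_le_mul_of_nonneg_right hmax hR)).trans_lt hhg

end Growth

/-! ### Truncation of the slope -/

section Truncation

variable {N : ℕ} {R K : ℝ} {g h : ℝ → ℝ} {μ : ℝ → ℝ≥0∞} {z : ℝ}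

lemma RadW.integrable_abs_deriv (u : RadW N R) :
    Integrable (fun r => |u.u' r|) (radialMeasure N R) :=
  integrable_radialMeasure_iff.2 u.integ

lemma RadW.neg_tailIntegral_le (u : RadW N R) {r : ℝ} (hr : r ∈ Ioc 0 R) :
    -tailIntegral R (fun ρ => |u.u' ρ|) r ≤ u.u r := by
  rw [u.rep r hr]
  exact neg_le_neg ((le_abs_self _).trans abs_integral_le_integral_abs)

lemma isAdmissibleSlope_min_abs_deriv (hK : 0 ≤ K) {u : RadW N R} (hu : memWmu N R μ u) :
    IsAdmissibleSlope N R K μ fun r => min |u.u' r| K where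
  aemeasurable := u.integrable_abs_deriv.aemeasurable.min aemeasurable_const
  mem_Icc r := ⟨le_min (abs_nonneg _) hK, min_le_right _ _⟩
  le_bound := by
    rw [ae_radialMeasure_eq]
    filter_upwards [hu] with r hr
    exact (ENNReal.ofReal_le_ofReal (min_le_left _ _)).trans hr

lemma integral_mul_tailIntegral_le_mul_integral (hN : 1 ≤ N) {d : ℝ → ℝ} {c : ℝ} (hc : 0 ≤ c)
    (hd : Integrable d (radialMeasure N R)) (hd0 : 0 ≤ d) :
    ∫ r, c * tailIntegral R d r ∂radialMeasure N R ≤ ∫ r, c * R / N * d r ∂radialMeasure N R := by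
  have hflux : (fun ρ => d ρ * radialFlux N (fun _ => c) ρ) =ᵐ[radialMeasure N R]
      fun ρ => d ρ * (c * ρ / N) := by
    filter_upwards [ae_radialMeasure_mem_Ioc N R] with ρ hρ
    rw [radialFlux_const hN c hρ.1]
  rw [integral_mul_tailIntegral_eq (B := |c|) aestronglyMeasurable_const (fun _ => le_rfl) hd,
    integral_congr_ae hflux]
  refine integral_mono_of_nonneg ?_ (hd.const_mul _) ?_
  all_goals filter_upwards [ae_radialMeasure_mem_Ioc N R] with ρ hρ
  · have := hρ.1
    have := hd0 ρ
    simp only [Pi.zero_apply] at this ⊢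
    positivity
  · rw [mul_comm]
    exact mul_le_mul_of_nonneg_right (by gcongr; exact hρ.2) (hd0 ρ)

lemma truncated_integrand_le (hg : ∀ s ≥ K, max (leftD h) 0 * R / N * (s - K) ≤ g s - g K)
    (hK : 0 ≤ K) (hh : ConvexOn ℝ univ h) (hr : 0 ≤ rightD h) (hz : z ∈ Icc (-(R * K)) 0)
    (hmin : IsMinOn h (Icc (-(R * K)) 0) z) (u : RadW N R) {r : ℝ} (hrR : r ∈ Ioc 0 R) :
    g |min |u.u' r| K| + h (max (-tailIntegral R (fun ρ => min |u.u' ρ| K) r) z) +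
        (max (leftD h) 0 * R / N * (|u.u' r| - min |u.u' r| K) -
          max (leftD h) 0 * tailIntegral R (fun ρ => |u.u' ρ| - min |u.u' ρ| K) r) ≤
      g |u.u' r| + h (u.u r) := by
  have hq : IsAdmissibleSlope N R K ⊤ fun r => min |u.u' r| K :=
    isAdmissibleSlope_min_abs_deriv hK (ae_of_all _ fun _ => le_top)
  have hslope : g |min |u.u' r| K| + max (leftD h) 0 * R / N * (|u.u' r| - min |u.u' r| K) ≤
      g |u.u' r| := by
    rw [abs_of_nonneg (hq.nonneg r)]
    rcases le_total |u.u' r| K with hle | hge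
    · simp [min_eq_left hle]
    · rw [min_eq_right hge]
      linarith [hg _ hge]
  have htail : tailIntegral R (fun ρ => |u.u' ρ| - min |u.u' ρ| K) r =
      tailIntegral R (fun ρ => |u.u' ρ|) r - tailIntegral R (fun ρ => min |u.u' ρ| K) r :=
    integral_sub (integrableOn_Ioc_of_integrable_radialMeasure u.integrable_abs_deriv hrR.1)
      (integrableOn_Ioc_of_integrable_radialMeasure hq.integrable hrR.1)
  have hpotential := comp_max_le_add_mul hh hr hz hmin (hq.neg_tailIntegral_mem_Icc hrR)
    (tailIntegral_nonneg (fun ρ => sub_nonneg.2 (min_le_left |u.u' ρ| K)) r)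
    (w := u.u r) (by linarith [u.neg_tailIntegral_le hrR])
  linarith

theorem reducedEnergy_min_abs_deriv_le_Fcon (hN : 1 ≤ N) (hg : ConvexOn ℝ univ fun t => g |t|)
    (hgK : ∀ s ≥ K, max (leftD h) 0 * R / N * (s - K) ≤ g s - g K)
    (hK : 0 ≤ K) (hh : ConvexOn ℝ univ h) (hr : 0 ≤ rightD h) (hz : z ∈ Icc (-(R * K)) 0)
    (hmin : IsMinOn h (Icc (-(R * K)) 0) z) (u : RadW N R) :
    ((reducedEnergy N R (fun t => g |t|) (fun t => h (max t z)) fun r => min |u.u' r| K : ℝ) :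
      EReal) ≤ Fcon N R g h u := by
  set c := max (leftD h) 0
  set q : ℝ → ℝ := fun r => min |u.u' r| K
  set d : ℝ → ℝ := fun r => |u.u' r| - q r
  have hc : 0 ≤ c := le_max_right _ _
  have hq : IsAdmissibleSlope N R K ⊤ q :=
    isAdmissibleSlope_min_abs_deriv hK (ae_of_all _ fun _ => le_top)
  have hd0 : 0 ≤ d := fun r => sub_nonneg.2 (min_le_left _ _)
  have hd : Integrable d (radialMeasure N R) := u.integrable_abs_deriv.sub hq.integrable
  have henergy : Integrable (fun r => g |q r| + h (max (-tailIntegral R q r) z))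
      (radialMeasure N R) :=
    (hq.integrable_comp (γ := fun t => g |t|) hg.locallyLipschitz.continuous).add
      (hq.integrable_comp_neg_tailIntegral (k := fun t => h (max t z))
        (hh.locallyLipschitz.continuous.comp (continuous_id.max continuous_const)))
  have hgain : Integrable (fun r => c * R / N * d r) (radialMeasure N R) := hd.const_mul _
  have hloss : Integrable (fun r => c * tailIntegral R d r) (radialMeasure N R) :=
    integrable_mul_tailIntegral (B := |c|) aestronglyMeasurable_const (fun _ => le_rfl) hd
  have hdiff : Integrable (fun r => c * R / N * d r - c * tailIntegral R d r)
      (radialMeasure N R) := hgain.sub hloss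
  calc _ ≤ ((∫ r, g |q r| + h (max (-tailIntegral R q r) z) +
        (c * R / N * d r - c * tailIntegral R d r) ∂radialMeasure N R : ℝ) : EReal) := by
        rw [integral_add henergy hdiff, integral_sub hgain hloss]
        exact EReal.coe_le_coe_iff.2 (le_add_of_nonneg_right
          (sub_nonneg.2 (integral_mul_tailIntegral_le_mul_integral hN hc hd hd0)))
    _ ≤ Fcon N R g h u := coe_integral_le_Fcon (henergy.add hdiff) fun r hrR =>
        truncated_integrand_le hgK hK hh hr hz hmin u hrR

end Truncation

/-! ### Minimizers -/

/-- The member of `𝒲` with nondecreasing derivative `p`. -/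
def RadW.ofMonotone (N : ℕ) (R : ℝ) {p : ℝ → ℝ} (hp : Monotone p) : RadW N R where
  u r := -tailIntegral R p r
  u' := p
  integ := (hp.intervalIntegrable.abs.continuousOn_mul (continuous_pow _).continuousOn).1
  rep _ _ := rfl

/-- The reflection `u ↦ -u`, which exchanges the two halves of the theorem. -/
def RadW.neg {N : ℕ} {R : ℝ} (u : RadW N R) : RadW N R where
  u r := -u.u r
  u' r := -u.u' r
  integ := by simpa only [abs_neg] using u.integ
  rep r hr := by rw [u.rep r hr, integral_neg]

section Minimizers

variable {N : ℕ} {R K : ℝ} {g h p : ℝ → ℝ} {μ : ℝ → ℝ≥0∞} {z : ℝ}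

lemma memWmu_ofMonotone_cutSlope (hp : Monotone p) (hpa : IsAdmissibleSlope N R K μ p) (a : ℝ) :
    memWmu N R μ (RadW.ofMonotone N R (cutSlope_monotone (R := R) hp hpa.nonneg a)) := by
  rw [memWmu, ← ae_radialMeasure_eq]
  filter_upwards [hpa.le_bound] with r hr
  have hcut := cutSlope_mem_Icc (R := R) hpa.nonneg a r
  exact (ENNReal.ofReal_le_ofReal ((abs_of_nonneg hcut.1).trans_le hcut.2)).trans hr

lemma Fcon_ofMonotone_cutSlope_le (hg : ConvexOn ℝ univ fun t => g |t|) (hh : Continuous h)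
    (hz : z ≤ 0) (hp : Monotone p) (hpa : IsAdmissibleSlope N R K μ p) :
    Fcon N R g h (RadW.ofMonotone N R (cutSlope_monotone (R := R) hp hpa.nonneg (-z))) ≤
      ((reducedEnergy N R (fun t => g |t|) (fun t => h (max t z)) p : ℝ) : EReal) := by
  refine Fcon_le_coe_integral
    ((hpa.integrable_comp (γ := fun t => g |t|) hg.locallyLipschitz.continuous).add
      (hpa.integrable_comp_neg_tailIntegral (k := fun t => h (max t z))
        (hh.comp (continuous_id.max continuous_const)))) fun r hr => add_le_add ?_ (le_of_eq ?_)
  · have hcut := cutSlope_mem_Icc (R := R) hpa.nonneg (-z) r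
    exact monotoneOn_of_convexOn_comp_abs hg (mem_Ici.2 (abs_nonneg _)) (mem_Ici.2 (abs_nonneg _))
      (abs_le_abs_of_nonneg hcut.1 hcut.2)
  · change h (-tailIntegral R (cutSlope R (-z) p) r) = h (max (-tailIntegral R p r) z)
    rw [tailIntegral_cutSlope hp hpa.nonneg (neg_nonneg.2 hz) hr.2, ← max_neg_neg, neg_neg]

theorem exists_monotone_convex_minimizer (hN : 1 ≤ N) (hR : 0 ≤ R)
    (hg : ConvexOn ℝ univ fun t => g |t|) (hh : ConvexOn ℝ univ h)
    (hhg : ((min |leftD h| |rightD h| * R : ℝ) : EReal) < ((N : ℝ) : EReal) * MconstE g)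
    (hμ : MonotoneOn μ (Icc 0 R)) (hr : 0 ≤ rightD h) :
    ∃ ubar : RadW N R, memWmu N R μ ubar ∧
      (∀ u : RadW N R, memWmu N R μ u → Fcon N R g h ubar ≤ Fcon N R g h u) ∧
      MonotoneOn ubar.u (Ioc 0 R) ∧ ConvexOn ℝ (Ioc 0 R) ubar.u := by
  have hhc : Continuous h := hh.locallyLipschitz.continuous
  obtain ⟨K, hK, hgK⟩ := exists_mul_sub_le_of_lt_MconstE hg
    (max_leftD_mul_div_lt_MconstE hN hR hh hhg)
  obtain ⟨z, hz, hmin⟩ := (isCompact_Icc (a := -(R * K)) (b := 0)).exists_isMinOn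
    (nonempty_Icc.2 (neg_nonpos.2 (mul_nonneg hR hK.le))) hhc.continuousOn
  have hm := monotoneOn_Ici_of_isMinOn hh hr hz hmin
  obtain ⟨p, hp, hpa, hpmin⟩ := exists_monotone_minimizer (N := N) hK.le
    (hμ.mono Ioc_subset_Icc_self) hg.locallyLipschitz.continuous (convexOn_comp_max hh hm)
    (monotone_comp_max hm)
  have hcut := cutSlope_monotone (R := R) hp hpa.nonneg (-z)
  refine ⟨RadW.ofMonotone N R hcut, memWmu_ofMonotone_cutSlope hp hpa (-z), fun u hu => ?_, ?_, ?_⟩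
  · calc Fcon N R g h (RadW.ofMonotone N R hcut)
        ≤ ((reducedEnergy N R (fun t => g |t|) (fun t => h (max t z)) p : ℝ) : EReal) :=
          Fcon_ofMonotone_cutSlope_le hg hhc hz.2 hp hpa
      _ ≤ _ := EReal.coe_le_coe_iff.2 (hpmin _ (isAdmissibleSlope_min_abs_deriv hK.le hu))
      _ ≤ Fcon N R g h u := reducedEnergy_min_abs_deriv_le_Fcon hN hg hgK hK.le hh hr hz hmin u
  · exact ((tailIntegral_antitone_of_monotone hcut fun r =>
      (cutSlope_mem_Icc hpa.nonneg (-z) r).1).neg).monotoneOn _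
  · exact (convexOn_neg_tailIntegral hcut).subset (fun _ hr => hr.2) (convex_Ioc 0 R)

lemma memWmu_neg {u : RadW N R} (hu : memWmu N R μ u) : memWmu N R μ u.neg := by
  simpa only [memWmu, RadW.neg, abs_neg] using hu

lemma Fcon_neg (g h : ℝ → ℝ) (u : RadW N R) :
    Fcon N R g h u.neg = Fcon N R g (fun t => h (-t)) u := by
  simp only [Fcon, RadW.neg, abs_neg]

lemma leftD_comp_neg (h : ℝ → ℝ) : leftD (fun t => h (-t)) = -rightD h := by
  rw [leftD, rightD, Real.sInf_def, neg_neg, ← image_neg_eq_neg, image_image, ← neg_zero,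
    ← image_neg_Ioi, image_image]
  simp only [neg_neg, neg_zero, div_neg]

lemma rightD_comp_neg (h : ℝ → ℝ) : rightD (fun t => h (-t)) = -leftD h := by
  rw [← neg_eq_iff_eq_neg, ← leftD_comp_neg]
  simp only [neg_neg]

end Minimizers

/-- under (g1), (g2), (h1) and (hg), if `h'₊(0) ≥ 0` there exists a
nondecreasing convex minimizer of `F` on `𝒲_μ`; symmetrically, if `h'₋(0) ≤ 0` there
exists a nonincreasing concave minimizer. -/
theorem constrained_convex_minimizer (N : ℕ) (hN : 1 ≤ N) (R : ℝ) (hR : 0 < R)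
    (g h : ℝ → ℝ) (μ : ℝ → ℝ≥0∞)
    (hg1 : ConvexOn ℝ univ (fun z : ℝ => g |z|))
    (hg2 : 0 < MconstE g)
    (hh1 : ConvexOn ℝ univ h)
    (hhg : ((min |leftD h| |rightD h| * R : ℝ) : EReal) < ((N : ℝ) : EReal) * MconstE g)
    (hμmono : MonotoneOn μ (Icc 0 R)) (hμpos : ∀ r ∈ Icc (0:ℝ) R, 0 < μ r) :
    (0 ≤ rightD h →
      ∃ ubar : RadW N R, memWmu N R μ ubar ∧
        (∀ u : RadW N R, memWmu N R μ u → Fcon N R g h ubar ≤ Fcon N R g h u) ∧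
        MonotoneOn ubar.u (Ioc 0 R) ∧ ConvexOn ℝ (Ioc 0 R) ubar.u) ∧
    (leftD h ≤ 0 →
      ∃ ubar : RadW N R, memWmu N R μ ubar ∧
        (∀ u : RadW N R, memWmu N R μ u → Fcon N R g h ubar ≤ Fcon N R g h u) ∧
        AntitoneOn ubar.u (Ioc 0 R) ∧ ConcaveOn ℝ (Ioc 0 R) ubar.u) := by
  refine ⟨exists_monotone_convex_minimizer hN hR.le hg1 hh1 hhg hμmono, fun hleft => ?_⟩
  have hh_neg : ConvexOn ℝ univ fun t => h (-t) := hh1.comp_linearMap (-LinearMap.id)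
  have hhg_neg : ((min |leftD fun t => h (-t)| |rightD fun t => h (-t)| * R : ℝ) : EReal) <
      ((N : ℝ) : EReal) * MconstE g := by
    rwa [leftD_comp_neg, rightD_comp_neg, abs_neg, abs_neg, min_comm]
  obtain ⟨v, hv, hmin, hmono, hconvex⟩ := exists_monotone_convex_minimizer hN hR.le hg1 hh_neg
    hhg_neg hμmono (by rwa [rightD_comp_neg, neg_nonneg])
  refine ⟨v.neg, memWmu_neg hv, fun u hu => ?_, hmono.neg, hconvex.neg⟩
  calc Fcon N R g h v.neg = Fcon N R g (fun t => h (-t)) v := Fcon_neg g h v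
    _ ≤ Fcon N R g (fun t => h (-t)) u.neg := hmin u.neg (memWmu_neg hu)
    _ = Fcon N R g h u := by simp only [Fcon_neg, neg_neg]
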